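/- arXiv:2501.14598 — 8 statements merged into one kernel-verified Lean document; each statement's English description precedes it below -/
import Mathlib

section
/- The relative precision function RP : ℝ × ℝ → [0,∞], defined by RP(x,y) = |log(x/y)| if x and y are both nonzero and have the same sign, RP(x,y) = 0 if x = y = 0, and RP(x,y) = ∞ otherwise, is an extended pseudometric on ℝ: for all real x, y, z one has RP(x,x) = 0, RP(x,y) = RP(y,x), and RP(x,z) ≤ RP(x,y) + RP(y,z). -/
/-!
On each open half-line, `RP` is the pullback of the usual distance on `ℝ` under `t ↦ log |t|`
(`RP_of_mul_pos`), and the classes `{0}`, `(0, ∞)`, `(-∞, 0)` are at distance `∞` from each other.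
Being at finite distance is an equivalence relation, so a triangle with finite right-hand side
lies in a single class, where the triangle inequality of `ℝ` applies (`RP_triangle`).
-/

open ENNReal

/-- The relative precision function: `RP x y = |log (x/y)|` if `x` and `y` are
both nonzero and have the same sign (i.e. `x * y > 0`), `0` if `x = y = 0`,
and `∞` otherwise. -/
noncomputable def RP (x y : ℝ) : ℝ≥0∞ :=
  if x = 0 ∧ y = 0 then 0
  else if x * y > 0 then ENNReal.ofReal |Real.log (x / y)|
  else ⊤

/-- On a pair of nonzero reals of the same sign, `RP` is the distance between the values of
`Real.log`; since `Real.log t = log |t|`, this holds for negative pairs too. -/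
theorem RP_of_mul_pos {x y : ℝ} (h : 0 < x * y) :
    RP x y = ENNReal.ofReal |Real.log x - Real.log y| := by
  have hx : x ≠ 0 := left_ne_zero_of_mul h.ne'
  have hy : y ≠ 0 := right_ne_zero_of_mul h.ne'
  simp [RP, hx, h, Real.log_div hx hy]

theorem RP_zero_zero : RP 0 0 = 0 := by simp [RP]

theorem RP_eq_top {x y : ℝ} (h0 : ¬(x = 0 ∧ y = 0)) (h : ¬0 < x * y) : RP x y = ⊤ := by
  rw [RP, if_neg h0, if_neg h]

theorem RP_self (x : ℝ) : RP x x = 0 := by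
  rcases eq_or_ne x 0 with rfl | hx
  · exact RP_zero_zero
  · simp [RP_of_mul_pos (mul_self_pos.2 hx)]

theorem RP_comm (x y : ℝ) : RP x y = RP y x := by
  by_cases h : 0 < x * y
  · rw [RP_of_mul_pos h, RP_of_mul_pos (mul_comm x y ▸ h), abs_sub_comm]
  · by_cases h0 : x = 0 ∧ y = 0
    · rw [h0.1, h0.2]
    · rw [RP_eq_top h0 h, RP_eq_top (fun h' => h0 h'.symm) (mul_comm x y ▸ h)]

/-- If either summand on the right is `⊤` there is nothing to prove. Otherwise `x, y, z` are all
zero or are all nonzero of one sign, and in the latter case the bound is the triangle inequality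
for the logarithms. -/
theorem RP_triangle (x y z : ℝ) : RP x z ≤ RP x y + RP y z := by
  by_cases hxy0 : x = 0 ∧ y = 0
  · obtain ⟨rfl, rfl⟩ := hxy0
    exact le_add_self
  by_cases hyz0 : y = 0 ∧ z = 0
  · obtain ⟨rfl, rfl⟩ := hyz0
    exact le_self_add
  by_cases hxy : 0 < x * y
  swap
  · simp [RP_eq_top hxy0 hxy]
  by_cases hyz : 0 < y * z
  swap
  · simp [RP_eq_top hyz0 hyz]
  -- `x * z` has the sign of `(x * y) * (y * z) = (x * z) * y ^ 2`.
  have hxz : 0 < x * z := by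
    have h : 0 < (x * z) * y ^ 2 := by
      have := mul_pos hxy hyz
      linarith
    exact pos_of_mul_pos_left h (sq_nonneg y)
  rw [RP_of_mul_pos hxy, RP_of_mul_pos hyz, RP_of_mul_pos hxz,
    ← ENNReal.ofReal_add (abs_nonneg _) (abs_nonneg _)]
  exact ENNReal.ofReal_le_ofReal (abs_sub_le _ _ _)

/-- `RP` is an extended pseudometric on `ℝ`. -/
theorem RP_isPseudometric :
    ∀ x y z : ℝ, RP x x = 0 ∧ RP x y = RP y x ∧ RP x z ≤ RP x y + RP y z := by
  exact fun x y z => ⟨RP_self x, RP_comm x y, RP_triangle x y z⟩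
end

section
/- Addition of positive reals is non-expansive from the max (additive-product) metric to the relative precision metric: for all positive reals a, b, a', b', one has |log((a + b)/(a' + b'))| ≤ max(|log(a/a')|, |log(b/b')|). -/
/-!
The bound `|log (x / y)| ≤ M` says exactly that `x ≤ exp M * y` and `y ≤ exp M * x`
(`abs_log_div_le_iff`). These inequalities are linear in `(x, y)`, so they are preserved by adding
two such pairs with a common `M`; here `M` is the larger of the two distances.
-/

lemma abs_log_div_le_iff {x y : ℝ} (hx : 0 < x) (hy : 0 < y) (M : ℝ) :
    |Real.log (x / y)| ≤ M ↔ x ≤ Real.exp M * y ∧ y ≤ Real.exp M * x := by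
  have h₁ : Real.log (x / y) ≤ M ↔ x ≤ Real.exp M * y := by
    rw [Real.log_le_iff_le_exp (div_pos hx hy), div_le_iff₀ hy]
  have h₂ : -Real.log (x / y) ≤ M ↔ y ≤ Real.exp M * x := by
    rw [← Real.log_inv, inv_div, Real.log_le_iff_le_exp (div_pos hy hx), div_le_iff₀ hx]
  rw [abs_le', h₁, h₂]

/-- Addition of positive reals is non-expansive from the max
(additive-product) metric to the relative precision metric. -/
theorem add_nonexpansive_RP (a b a' b' : ℝ)
    (ha : 0 < a) (hb : 0 < b) (ha' : 0 < a') (hb' : 0 < b') :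
    |Real.log ((a + b) / (a' + b'))| ≤
      max |Real.log (a / a')| |Real.log (b / b')| := by
  obtain ⟨h₁, h₂⟩ := (abs_log_div_le_iff ha ha' _).1
    (le_max_left |Real.log (a / a')| |Real.log (b / b')|)
  obtain ⟨h₃, h₄⟩ := (abs_log_div_le_iff hb hb' _).1
    (le_max_right |Real.log (a / a')| |Real.log (b / b')|)
  rw [abs_log_div_le_iff (add_pos ha hb) (add_pos ha' hb'), mul_add, mul_add]
  exact ⟨add_le_add h₁ h₃, add_le_add h₂ h₄⟩
end

section
/- Sensitivity bound for second-order polynomial evaluation (Horner/ideal semantics): for all positive reals a₀, a₁, a₂, u₀, u₁, u₂, x, x', one has |log( (a₂x² + a₁x + a₀) / (u₂x'² + u₁x' + u₀) )| ≤ |log(a₀/u₀)| + |log(a₁/u₁)| + |log(a₂/u₂)| + 2·|log(x/x')|. -/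
/-!
Put `S` for the right-hand side. Each monomial satisfies `aᵢ xⁱ ≤ exp S * (uᵢ x'ⁱ)`, since
`log (aᵢ xⁱ / (uᵢ x'ⁱ)) = log (aᵢ / uᵢ) + i * log (x / x')` and `i ≤ 2`. Summing the three
inequalities, all terms being positive, bounds the quotient of the polynomials by `exp S`. As `S`
is symmetric under exchanging `(a, x)` and `(u, x')`, the inverse quotient has the same bound.
-/

theorem abs_log_div_comm (y z : ℝ) : |Real.log (y / z)| = |Real.log (z / y)| := by
  rw [← inv_div z y, Real.log_inv, abs_neg]

theorem monomial_le_exp_mul {a u x x' S : ℝ} {k : ℕ} (ha : 0 < a) (hu : 0 < u)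
    (hx : 0 < x) (hx' : 0 < x') (hS : |Real.log (a / u)| + k * |Real.log (x / x')| ≤ S) :
    a * x ^ k ≤ Real.exp S * (u * x' ^ k) := by
  have hlog : Real.log (a * x ^ k / (u * x' ^ k)) ≤ S := by
    rw [mul_div_mul_comm, ← div_pow, Real.log_mul (by positivity) (by positivity), Real.log_pow]
    refine le_trans ?_ hS
    gcongr <;> exact le_abs_self _
  rwa [Real.log_le_iff_le_exp (by positivity), div_le_iff₀ (by positivity)] at hlog

/-- The one-sided form of the sensitivity bound, without the outer absolute value. -/
theorem horner2_log_le (a₀ a₁ a₂ u₀ u₁ u₂ x x' : ℝ)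
    (ha₀ : 0 < a₀) (ha₁ : 0 < a₁) (ha₂ : 0 < a₂)
    (hu₀ : 0 < u₀) (hu₁ : 0 < u₁) (hu₂ : 0 < u₂)
    (hx : 0 < x) (hx' : 0 < x') :
    Real.log ((a₂ * x ^ 2 + a₁ * x + a₀) / (u₂ * x' ^ 2 + u₁ * x' + u₀)) ≤
      |Real.log (a₀ / u₀)| + |Real.log (a₁ / u₁)| + |Real.log (a₂ / u₂)| +
        2 * |Real.log (x / x')| := by
  rw [Real.log_le_iff_le_exp (by positivity), div_le_iff₀ (by positivity)]
  have h0 := abs_nonneg (Real.log (a₀ / u₀))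
  have h1 := abs_nonneg (Real.log (a₁ / u₁))
  have h2 := abs_nonneg (Real.log (a₂ / u₂))
  have h3 := abs_nonneg (Real.log (x / x'))
  set S := |Real.log (a₀ / u₀)| + |Real.log (a₁ / u₁)| + |Real.log (a₂ / u₂)| +
    2 * |Real.log (x / x')| with hS
  have m0 := monomial_le_exp_mul (S := S) (k := 0) ha₀ hu₀ hx hx' (by push_cast; linarith)
  have m1 := monomial_le_exp_mul (S := S) (k := 1) ha₁ hu₁ hx hx' (by push_cast; linarith)
  have m2 := monomial_le_exp_mul (S := S) (k := 2) ha₂ hu₂ hx hx' (by push_cast; linarith)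
  rw [pow_zero, pow_zero, mul_one, mul_one] at m0
  rw [pow_one, pow_one] at m1
  linarith

/-- Sensitivity bound for second-order polynomial evaluation
(Horner / ideal semantics). -/
theorem horner2_sensitivity_RP (a₀ a₁ a₂ u₀ u₁ u₂ x x' : ℝ)
    (ha₀ : 0 < a₀) (ha₁ : 0 < a₁) (ha₂ : 0 < a₂)
    (hu₀ : 0 < u₀) (hu₁ : 0 < u₁) (hu₂ : 0 < u₂)
    (hx : 0 < x) (hx' : 0 < x') :
    |Real.log ((a₂ * x ^ 2 + a₁ * x + a₀) / (u₂ * x' ^ 2 + u₁ * x' + u₀))| ≤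
      |Real.log (a₀ / u₀)| + |Real.log (a₁ / u₁)| + |Real.log (a₂ / u₂)| +
        2 * |Real.log (x / x')| := by
  refine abs_le'.mpr ⟨horner2_log_le a₀ a₁ a₂ u₀ u₁ u₂ x x' ha₀ ha₁ ha₂ hu₀ hu₁ hu₂ hx hx', ?_⟩
  rw [← Real.log_inv, inv_div, abs_log_div_comm a₀, abs_log_div_comm a₁, abs_log_div_comm a₂,
    abs_log_div_comm x]
  exact horner2_log_le u₀ u₁ u₂ a₀ a₁ a₂ x' x hu₀ hu₁ hu₂ ha₀ ha₁ ha₂ hx' hx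
end

section
/- Composition of backward error lenses is a backward error lens: let (X,d_X), (Y,d_Y), (Z,d_Z) be generalized distance spaces and let (f₁, f̃₁, b₁) : X → Y and (f₂, f̃₂, b₂) : Y → Z be backward error lenses. Define f = f₂ ∘ f₁, f̃ = f̃₂ ∘ f̃₁, and b(x,z) = b₁(x, b₂(f̃₁(x), z)). Then for all x ∈ X and z ∈ Z with d_Z(f̃(x), z) ≠ +∞: (domain) d_Y(f̃₁(x), b₂(f̃₁(x), z)) ≠ +∞; (Property 1) d_X(x, b(x,z)) ≤ d_Z(f̃(x), z); and (Property 2) f(b(x,z)) = z. -/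
/-- A backward error lens between generalized distance spaces `(X, dX)` and
`(Y, dY)`: a triple `(f, f̃, b)` such that for all `x, y` with
`dY (f̃ x) y ≠ ⊤`, we have `dX x (b x y) ≤ dY (f̃ x) y` and `f (b x y) = y`. -/
def IsBELens {X Y : Type*} (dX : X → X → EReal) (dY : Y → Y → EReal)
    (f ftil : X → Y) (b : X → Y → X) : Prop :=
  ∀ x y, dY (ftil x) y ≠ ⊤ →
    dX x (b x y) ≤ dY (ftil x) y ∧ f (b x y) = y

/-- Composition of backward error lenses is a backward error lens: the domain
condition, Property 1, and Property 2 hold for the composite maps. -/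
theorem belens_comp {X Y Z : Type*}
    (dX : X → X → EReal) (dY : Y → Y → EReal) (dZ : Z → Z → EReal)
    (hX : ∀ x, dX x x ≤ 0) (hY : ∀ y, dY y y ≤ 0) (hZ : ∀ z, dZ z z ≤ 0)
    (f₁ ft₁ : X → Y) (b₁ : X → Y → X)
    (f₂ ft₂ : Y → Z) (b₂ : Y → Z → Y)
    (hL₁ : IsBELens dX dY f₁ ft₁ b₁) (hL₂ : IsBELens dY dZ f₂ ft₂ b₂) :
    ∀ x z, dZ (ft₂ (ft₁ x)) z ≠ ⊤ →
      dY (ft₁ x) (b₂ (ft₁ x) z) ≠ ⊤ ∧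
      dX x (b₁ x (b₂ (ft₁ x) z)) ≤ dZ (ft₂ (ft₁ x)) z ∧
      f₂ (f₁ (b₁ x (b₂ (ft₁ x) z))) = z := by
  intro x z hz
  obtain ⟨hd₂, hf₂⟩ := hL₂ (ft₁ x) z hz
  -- Property 1 of the second lens bounds the intermediate distance by a value below `⊤`.
  have hdom : dY (ft₁ x) (b₂ (ft₁ x) z) ≠ ⊤ := ne_top_of_le_ne_top hz hd₂
  obtain ⟨hd₁, hf₁⟩ := hL₁ x (b₂ (ft₁ x) z) hdom
  exact ⟨hdom, hd₁.trans hd₂, by rw [hf₁, hf₂]⟩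
end

section
/- The tensor product of backward error lenses is a backward error lens: let (A,d_A), (B,d_B), (X,d_X), (Y,d_Y) be generalized distance spaces, give A × B the distance d_{A⊗B}((a₁,a₂),(a₁',a₂')) = max(d_A(a₁,a₁'), d_B(a₂,a₂')) and similarly X × Y, and let (f, f̃, b) : A → X and (g, g̃, b') : B → Y be backward error lenses. Then the triple with forward map (a₁,a₂) ↦ (f a₁, g a₂), approximation map (a₁,a₂) ↦ (f̃ a₁, g̃ a₂), and backward map ((a₁,a₂),(x₁,x₂)) ↦ (b(a₁,x₁), b'(a₂,x₂)) is a backward error lens from A ⊗ B to X ⊗ Y. -/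
/-- The tensor product of backward error lenses (with the componentwise max
distance on products) is a backward error lens. -/
theorem belens_tensor {A B X Y : Type*}
    (dA : A → A → EReal) (dB : B → B → EReal)
    (dX : X → X → EReal) (dY : Y → Y → EReal)
    (hA : ∀ a, dA a a ≤ 0) (hB : ∀ b, dB b b ≤ 0)
    (hX : ∀ x, dX x x ≤ 0) (hY : ∀ y, dY y y ≤ 0)
    (f ft : A → X) (b : A → X → A)
    (g gt : B → Y) (b' : B → Y → B)
    (hf : IsBELens dA dX f ft b) (hg : IsBELens dB dY g gt b') :
    IsBELens
      (fun p q : A × B => max (dA p.1 q.1) (dB p.2 q.2))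
      (fun p q : X × Y => max (dX p.1 q.1) (dY p.2 q.2))
      (fun p : A × B => (f p.1, g p.2))
      (fun p : A × B => (ft p.1, gt p.2))
      (fun (p : A × B) (q : X × Y) => (b p.1 q.1, b' p.2 q.2)) := by
  rintro ⟨a₁, a₂⟩ ⟨x₁, x₂⟩ h
  -- A maximum differs from `⊤` only if both entries do, so both lens laws apply.
  have h₁ : dX (ft a₁) x₁ ≠ ⊤ := ne_top_of_le_ne_top h (le_max_left _ _)
  have h₂ : dY (gt a₂) x₂ ≠ ⊤ := ne_top_of_le_ne_top h (le_max_right _ _)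
  obtain ⟨hd₁, he₁⟩ := hf a₁ x₁ h₁
  obtain ⟨hd₂, he₂⟩ := hg a₂ x₂ h₂
  exact ⟨max_le_max hd₁ hd₂, Prod.ext he₁ he₂⟩
end

section
/- Backward error lens for floating-point addition: let ε > 0 and δ be reals with |δ| ≤ ε. For all positive reals x₁, x₂, x₃: (i) the backward-map components b = (x₃·x₁/(x₁+x₂), x₃·x₂/(x₁+x₂)) satisfy |log(x₁ / (x₃·x₁/(x₁+x₂)))| = |log(x₂ / (x₃·x₂/(x₁+x₂)))| = |log((x₁+x₂)/x₃)|; (ii) Property 1 holds with shift ε: |log((x₁+x₂)/x₃)| ≤ |log(((x₁+x₂)·e^{δ})/x₃)| + ε; and (iii) Property 2 holds: x₃·x₁/(x₁+x₂) + x₃·x₂/(x₁+x₂) = x₃. Hence floating-point addition with approximation map (x₁,x₂) ↦ (x₁+x₂)·e^{δ} assigns backward error at most ε to each argument. -/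
/-- Backward error lens for floating-point addition: the backward map assigns
backward error at most `ε` to each argument. -/
theorem belens_fp_add (ε δ : ℝ) (hε : 0 < ε) (hδ : |δ| ≤ ε)
    (x₁ x₂ x₃ : ℝ) (h₁ : 0 < x₁) (h₂ : 0 < x₂) (h₃ : 0 < x₃) :
    -- (i) the backward-map components are at equal RP distance from the inputs
    (|Real.log (x₁ / (x₃ * x₁ / (x₁ + x₂)))| =
        |Real.log (x₂ / (x₃ * x₂ / (x₁ + x₂)))| ∧
      |Real.log (x₁ / (x₃ * x₁ / (x₁ + x₂)))| =
        |Real.log ((x₁ + x₂) / x₃)|) ∧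
    -- (ii) Property 1 with grade shift ε
    |Real.log ((x₁ + x₂) / x₃)| ≤
      |Real.log ((x₁ + x₂) * Real.exp δ / x₃)| + ε ∧
    -- (iii) Property 2
    x₃ * x₁ / (x₁ + x₂) + x₃ * x₂ / (x₁ + x₂) = x₃ := by
  have e₁ : x₁ / (x₃ * x₁ / (x₁ + x₂)) = (x₁ + x₂) / x₃ := by field_simp
  have e₂ : x₂ / (x₃ * x₂ / (x₁ + x₂)) = (x₁ + x₂) / x₃ := by field_simp
  refine ⟨⟨by rw [e₁, e₂], by rw [e₁]⟩, ?_, by field_simp⟩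
  -- On the logarithmic scale the rounding factor `exp δ` is a translation by `δ`.
  have hlog : Real.log ((x₁ + x₂) * Real.exp δ / x₃) = Real.log ((x₁ + x₂) / x₃) + δ := by
    rw [mul_div_right_comm, Real.log_mul (by positivity) (Real.exp_ne_zero δ), Real.log_exp]
  rw [hlog]
  have htri := abs_sub (Real.log ((x₁ + x₂) / x₃) + δ) δ
  rw [add_sub_cancel_right] at htri
  linarith
end

section
/- Backward error lens for floating-point multiplication: let ε > 0 and δ be reals with |δ| ≤ ε. For all positive reals x₁, x₂, x₃: (i) the backward-map components b = (x₁·√(x₃/(x₁·x₂)), x₂·√(x₃/(x₁·x₂))) satisfy |log(x₁ / (x₁·√(x₃/(x₁·x₂))))| = |log(x₂ / (x₂·√(x₃/(x₁·x₂))))| = (1/2)·|log((x₁·x₂)/x₃)|; (ii) Property 1 holds with shift ε/2: (1/2)·|log((x₁·x₂)/x₃)| ≤ |log((x₁·x₂·e^{δ})/x₃)| + ε/2; and (iii) Property 2 holds: (x₁·√(x₃/(x₁·x₂)))·(x₂·√(x₃/(x₁·x₂))) = x₃. Hence floating-point multiplication with approximation map (x₁,x₂) ↦ x₁·x₂·e^{δ}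 assigns backward error at most ε/2 to each argument. -/
/-!
Write `L = log (x₁ x₂ / x₃)`. The backward map multiplies both inputs by
`√(x₃ / (x₁ x₂)) = exp (-L / 2)`, so each input moves by exactly `|L| / 2` in the metric `RP`,
and the product of the two factors is `x₃ / (x₁ x₂)`, which gives the second property.
The output distance is `|L + δ|`, and `|L| ≤ |L + δ| + ε` by the triangle inequality; halving
this gives the first property with shift `ε / 2`.
-/

/-- Scaling an input by `√(1 / t)` moves it by half of `|log t|` in the metric `RP`. -/
lemma abs_log_div_mul_sqrt_inv {x t : ℝ} (hx : 0 < x) (ht : 0 < t) :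
    |Real.log (x / (x * Real.sqrt t⁻¹))| = (1 / 2) * |Real.log t| := by
  have h : x / (x * Real.sqrt t⁻¹) = Real.sqrt t := by
    rw [Real.sqrt_inv, div_mul_cancel_left₀ hx.ne', inv_inv]
  rw [h, Real.log_sqrt ht.le, abs_div, abs_two]
  ring

/-- Backward error lens for floating-point multiplication: the backward map
assigns backward error at most `ε/2` to each argument. -/
theorem belens_fp_mul (ε δ : ℝ) (hε : 0 < ε) (hδ : |δ| ≤ ε)
    (x₁ x₂ x₃ : ℝ) (h₁ : 0 < x₁) (h₂ : 0 < x₂) (h₃ : 0 < x₃) :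
    -- (i) the backward-map components are at equal RP distance from the inputs
    (|Real.log (x₁ / (x₁ * Real.sqrt (x₃ / (x₁ * x₂))))| =
        |Real.log (x₂ / (x₂ * Real.sqrt (x₃ / (x₁ * x₂))))| ∧
      |Real.log (x₁ / (x₁ * Real.sqrt (x₃ / (x₁ * x₂))))| =
        (1 / 2) * |Real.log ((x₁ * x₂) / x₃)|) ∧
    -- (ii) Property 1 with grade shift ε/2
    (1 / 2) * |Real.log ((x₁ * x₂) / x₃)| ≤
      |Real.log (x₁ * x₂ * Real.exp δ / x₃)| + ε / 2 ∧
    -- (iii) Property 2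
    (x₁ * Real.sqrt (x₃ / (x₁ * x₂))) * (x₂ * Real.sqrt (x₃ / (x₁ * x₂))) = x₃ := by
  have hp : 0 < x₁ * x₂ := mul_pos h₁ h₂
  have ht : 0 < x₁ * x₂ / x₃ := div_pos hp h₃
  have hinv : x₃ / (x₁ * x₂) = (x₁ * x₂ / x₃)⁻¹ := (inv_div _ _).symm
  have hlog : Real.log (x₁ * x₂ * Real.exp δ / x₃) = Real.log (x₁ * x₂ / x₃) + δ := by
    rw [mul_div_right_comm, Real.log_mul ht.ne' (Real.exp_ne_zero δ), Real.log_exp]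
  refine ⟨?_, ?_, ?_⟩
  · rw [hinv, abs_log_div_mul_sqrt_inv h₁ ht, abs_log_div_mul_sqrt_inv h₂ ht]
    exact ⟨rfl, rfl⟩
  · rw [hlog]
    have htri := abs_sub (Real.log (x₁ * x₂ / x₃) + δ) δ
    rw [add_sub_cancel_right] at htri
    linarith [abs_nonneg (Real.log (x₁ * x₂ / x₃) + δ)]
  · rw [mul_mul_mul_comm, Real.mul_self_sqrt (div_pos h₃ hp).le]
    exact mul_div_cancel₀ x₃ hp.ne'
end

section
/- Backward error lens for floating-point division: let ε > 0 and δ be reals with |δ| ≤ ε. For all positive reals x₁, x₂, x₃: (i) the backward-map components b = (√(x₁·x₂·x₃), √((x₁·x₂)/x₃)) satisfy |log(x₁/√(x₁·x₂·x₃))| = |log(x₂/√((x₁·x₂)/x₃))| = (1/2)·|log(x₁/(x₂·x₃))|; (ii) Property 1 holds with shift ε/2: (1/2)·|log(x₁/(x₂·x₃))| ≤ |log(((x₁/x₂)·e^{δ})/x₃)| + ε/2; and (iii) Property 2 holds: √(x₁·x₂·x₃) / √((x₁·x₂)/x₃) = x₃. Hence floating-point division with approximation map (x₁,x₂) ↦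 (x₁/x₂)·e^{δ} assigns backward error at most ε/2 to each argument. -/
/-!
Write `L = log (x₁ / (x₂ * x₃))`. Taking logarithms turns the three distances into linear
expressions: the two input distances are `|L / 2|` and `|-(L / 2)|`, and the output distance
is `|L + δ|`. Property 1 then follows from the triangle inequality `|L| ≤ |L + δ| + |δ|`,
halved, and Property 2 from `x₁ x₂ x₃ / (x₁ x₂ / x₃) = x₃ ^ 2`.
-/


/-- Backward error lens for floating-point division: the backward map assigns
backward error at most `ε/2` to each argument. -/
theorem belens_fp_div (ε δ : ℝ) (hε : 0 < ε) (hδ : |δ| ≤ ε)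
    (x₁ x₂ x₃ : ℝ) (h₁ : 0 < x₁) (h₂ : 0 < x₂) (h₃ : 0 < x₃) :
    -- (i) the backward-map components are at equal RP distance from the inputs
    (|Real.log (x₁ / Real.sqrt (x₁ * x₂ * x₃))| =
        |Real.log (x₂ / Real.sqrt ((x₁ * x₂) / x₃))| ∧
      |Real.log (x₁ / Real.sqrt (x₁ * x₂ * x₃))| =
        (1 / 2) * |Real.log (x₁ / (x₂ * x₃))|) ∧
    -- (ii) Property 1 with grade shift ε/2
    (1 / 2) * |Real.log (x₁ / (x₂ * x₃))| ≤
      |Real.log ((x₁ / x₂) * Real.exp δ / x₃)| + ε / 2 ∧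
    -- (iii) Property 2
    Real.sqrt (x₁ * x₂ * x₃) / Real.sqrt ((x₁ * x₂) / x₃) = x₃ := by
  have hL₁ : Real.log (x₁ / Real.sqrt (x₁ * x₂ * x₃)) =
      (1 / 2) * Real.log (x₁ / (x₂ * x₃)) := by
    rw [Real.log_div h₁.ne' (by positivity), Real.log_sqrt (by positivity),
      Real.log_mul (by positivity) h₃.ne', Real.log_mul h₁.ne' h₂.ne',
      Real.log_div h₁.ne' (by positivity), Real.log_mul h₂.ne' h₃.ne']
    ring
  have hL₂ : Real.log (x₂ / Real.sqrt ((x₁ * x₂) / x₃)) =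
      -((1 / 2) * Real.log (x₁ / (x₂ * x₃))) := by
    rw [Real.log_div h₂.ne' (by positivity), Real.log_sqrt (by positivity),
      Real.log_div (by positivity) h₃.ne', Real.log_mul h₁.ne' h₂.ne',
      Real.log_div h₁.ne' (by positivity), Real.log_mul h₂.ne' h₃.ne']
    ring
  have hL₃ : Real.log ((x₁ / x₂) * Real.exp δ / x₃) =
      Real.log (x₁ / (x₂ * x₃)) + δ := by
    rw [Real.log_div (by positivity) h₃.ne', Real.log_mul (by positivity) (by positivity),
      Real.log_exp, Real.log_div h₁.ne' h₂.ne',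
      Real.log_div h₁.ne' (by positivity), Real.log_mul h₂.ne' h₃.ne']
    ring
  rw [hL₁, hL₂, hL₃]
  refine ⟨⟨(abs_neg _).symm, ?_⟩, ?_, ?_⟩
  · rw [abs_mul, abs_of_pos (by norm_num : (0 : ℝ) < 1 / 2)]
  · have htri := abs_sub (Real.log (x₁ / (x₂ * x₃)) + δ) δ
    rw [add_sub_cancel_right] at htri
    linarith [abs_nonneg (Real.log (x₁ / (x₂ * x₃)) + δ)]
  · have hq : x₁ * x₂ * x₃ / ((x₁ * x₂) / x₃) = x₃ ^ 2 := by
      field_simp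
    rw [← Real.sqrt_div (by positivity), hq, Real.sqrt_sq h₃.le]
end
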